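/- arXiv:2502.08773 — 4 statements merged into one kernel-verified Lean document; each statement's English description precedes it below -/
import Mathlib

section
/- Let (X, 𝒜, μ) be a probability space, M ∈ ℕ with M ≥ 1, e : X → Fin M → ℝ with x ↦ e x m integrable for each m, c : Fin M → ℝ, and λ ≥ 0. Suppose r⋆ : X → Fin M is measurable and satisfies e x (r⋆ x) + λ·c (r⋆ x) ≤ e x m + λ·c m for every x ∈ X and every m ∈ Fin M. Then for every measurable router r : X → Fin M whose routed cost satisfies ∫ c (r x) dμ(x) ≤ ∫ c (r⋆ x) dμ(x), one has ∫ e x (r⋆ x) dμ(x) ≤ ∫ e x (r x) dμ(x). In other words, the router that routes each input to the model with the smallest cost-adjusted conditional expected loss minimizes the routed risk among all routers of no larger routed cost. -/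
open MeasureTheory

/-- Routing integrable losses through a measurable router gives an integrable function. -/
theorem routed_integrable {X : Type*} [MeasurableSpace X] {μ : Measure X} {M : ℕ}
    {e : X → Fin M → ℝ} (hint : ∀ m : Fin M, Integrable (fun x => e x m) μ)
    {r : X → Fin M} (hr : Measurable r) : Integrable (fun x => e x (r x)) μ := by
  have h : Integrable
      (fun x => ∑ m : Fin M, (r ⁻¹' {m}).indicator (fun x => e x m) x) μ :=
    integrable_finsetSum _ fun m _ => (hint m).indicator (hr (measurableSet_singleton m))
  refine h.congr (Filter.Eventually.of_forall fun x => ?_)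
  change ∑ m : Fin M, (r ⁻¹' {m}).indicator (fun x => e x m) x = e x (r x)
  rw [Finset.sum_eq_single (r x)]
  · exact Set.indicator_of_mem (by simp) _
  · intro m _ hm
    exact Set.indicator_of_notMem (by simpa using hm.symm) _
  · simp

/-- The router that routes each input to the model with the smallest cost-adjusted
conditional expected loss minimizes the routed risk among all routers of no larger
routed cost. -/
theorem costAdjusted_pointwise_optimal_router_minimizes_risk
    {X : Type*} [MeasurableSpace X] (μ : Measure X) [IsProbabilityMeasure μ]
    (M : ℕ) (hM : 1 ≤ M) (e : X → Fin M → ℝ)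
    (hint : ∀ m : Fin M, Integrable (fun x => e x m) μ)
    (c : Fin M → ℝ) (lam : ℝ) (hlam : 0 ≤ lam)
    (rstar : X → Fin M) (hrstar : Measurable rstar)
    (hopt : ∀ x : X, ∀ m : Fin M,
      e x (rstar x) + lam * c (rstar x) ≤ e x m + lam * c m) :
    ∀ r : X → Fin M, Measurable r →
      (∫ x, c (r x) ∂μ) ≤ (∫ x, c (rstar x) ∂μ) →
      ∫ x, e x (rstar x) ∂μ ≤ ∫ x, e x (r x) ∂μ := by
  intro r hr hc
  have h1 := routed_integrable hint hrstar
  have h2 := routed_integrable hint hr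
  have h3 : Integrable (fun x => c (rstar x)) μ :=
    routed_integrable (e := fun _ m => c m) (fun m => integrable_const _) hrstar
  have h4 : Integrable (fun x => c (r x)) μ :=
    routed_integrable (e := fun _ m => c m) (fun m => integrable_const _) hr
  have key := integral_mono (h1.add (h3.const_mul lam)) (h2.add (h4.const_mul lam))
    (fun x => hopt x (r x))
  rw [integral_add' h1 (h3.const_mul lam), integral_add' h2 (h4.const_mul lam),
    integral_const_mul, integral_const_mul] at key
  have := mul_le_mul_of_nonneg_left hc hlam
  linarith
end

section
/- Let X be a set, M ∈ ℕ with M ≥ 1, e : X → Fin M → ℝ, and c : Fin M → ℝ an injective cost function. Let 0 ≤ λ ≤ λ', and let r_λ, r_{λ'} : X → Fin M satisfy, for every x ∈ X and every m ∈ Fin M, e x (r_λ x) + λ·c (r_λ x) ≤ e x m + λ·c m and e x (r_{λ'} x) + λ'·c (r_{λ'} x) ≤ e x m + λ'·c m. Then the disagreement set {x : r_λ x ≠ r_{λ'} x} is contained in the union over ordered pairs m ≠ k in Fin M of the sets {x : λ ≤ (e x k − e x m)/(c m − c k) ≤ λ'}. -/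
/-- The set of inputs on which the routers at trade-offs `λ ≤ λ'` disagree is covered
by the sets where some pairwise crossing value `(e x k − e x m)/(c m − c k)` lies in
`[λ, λ']`. -/
theorem disagreement_subset_crossing_union
    {X : Type*} (M : ℕ) (hM : 1 ≤ M) (e : X → Fin M → ℝ)
    (c : Fin M → ℝ) (hc : Function.Injective c)
    (lam lam' : ℝ) (hlam : 0 ≤ lam) (hle : lam ≤ lam')
    (rl rl' : X → Fin M)
    (hrl : ∀ x : X, ∀ m : Fin M,
      e x (rl x) + lam * c (rl x) ≤ e x m + lam * c m)
    (hrl' : ∀ x : X, ∀ m : Fin M,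
      e x (rl' x) + lam' * c (rl' x) ≤ e x m + lam' * c m) :
    {x : X | rl x ≠ rl' x} ⊆
      ⋃ (m : Fin M) (k : Fin M) (_ : m ≠ k),
        {x : X | lam ≤ (e x k - e x m) / (c m - c k) ∧
                 (e x k - e x m) / (c m - c k) ≤ lam'} := by
  intro x hx
  have hx' : rl x ≠ rl' x := hx
  simp only [Set.mem_iUnion, Set.mem_setOf_eq]
  refine ⟨rl x, rl' x, hx', ?_⟩
  have h1 := hrl x (rl' x)
  have h2 := hrl' x (rl x)
  have hne : c (rl x) ≠ c (rl' x) := fun h => hx' (hc h)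
  rcases lt_or_gt_of_ne hne with h | h
  · have hd : c (rl x) - c (rl' x) < 0 := by linarith
    have hl : lam' ≤ lam := by
      by_contra hcon
      push Not at hcon
      nlinarith [mul_pos (sub_pos.mpr hcon) (sub_pos.mpr h)]
    have heq : lam = lam' := le_antisymm hle hl
    subst heq
    rw [le_div_iff_of_neg hd, div_le_iff_of_neg hd]
    constructor <;> linarith
  · have hd : 0 < c (rl x) - c (rl' x) := by linarith
    rw [le_div_iff₀ hd, div_le_iff₀ hd]
    constructor <;> linarith
end

section
/- Let (X, 𝒜, μ) be a probability space, M ∈ ℕ with M ≥ 1, e : X → Fin M → ℝ with x ↦ e x m measurable for each m, and c : Fin M → ℝ an injective cost function with 0 ≤ c m ≤ c_max for all m. For each λ ≥ 0 let r_λ : X → Fin M be a measurable router satisfying, for every x ∈ X and m ∈ Fin M, e x (r_λ x) + λ·c (r_λ x) ≤ e x m + λ·c m. Assume that for every pair m ≠ k in Fin M and every t ∈ ℝ, μ({x : (e x k − e x m)/(c m − c k) = t}) = 0. Then the map λ ↦ ∫ c (r_λ x) dμ(x) is continuous on [0, ∞). -/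
open MeasureTheory

/-- Under the atomless crossing-value assumption, the routed cost of the pointwise
cost-adjusted-optimal router is continuous in the trade-off parameter `λ` on `[0, ∞)`. -/
theorem routed_cost_continuousOn
    {X : Type*} [MeasurableSpace X] (μ : Measure X) [IsProbabilityMeasure μ]
    (M : ℕ) (hM : 1 ≤ M) (e : X → Fin M → ℝ)
    (hemeas : ∀ m : Fin M, Measurable fun x => e x m)
    (c : Fin M → ℝ) (hc : Function.Injective c) (cmax : ℝ)
    (hc0 : ∀ m : Fin M, 0 ≤ c m) (hcmax : ∀ m : Fin M, c m ≤ cmax)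
    (r : ℝ → X → Fin M) (hrmeas : ∀ lam : ℝ, Measurable (r lam))
    (hopt : ∀ lam : ℝ, 0 ≤ lam → ∀ x : X, ∀ m : Fin M,
      e x (r lam x) + lam * c (r lam x) ≤ e x m + lam * c m)
    (hatom : ∀ m k : Fin M, m ≠ k → ∀ t : ℝ,
      μ {x | (e x k - e x m) / (c m - c k) = t} = 0) :
    ContinuousOn (fun lam => ∫ x, c (r lam x) ∂μ) (Set.Ici (0:ℝ)) := by
  intro l0 hl0
  have hl0' : 0 ≤ l0 := hl0
  have hae : ∀ᵐ x ∂μ, ∀ m k : Fin M, m ≠ k → (e x k - e x m) / (c m - c k) ≠ l0 := by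
    rw [ae_all_iff]
    intro m
    rw [ae_all_iff]
    intro k
    by_cases hmk : m = k
    · exact Filter.Eventually.of_forall fun x h => absurd hmk h
    · have h := hatom m k hmk l0
      rw [ae_iff]
      simpa [hmk] using h
  refine continuousWithinAt_of_dominated (bound := fun _ => cmax) ?_ ?_
    (integrable_const _) ?_
  · refine Filter.Eventually.of_forall fun lam => ?_
    exact ((measurable_of_finite c).comp (hrmeas lam)).aestronglyMeasurable
  · refine Filter.Eventually.of_forall fun lam => Filter.Eventually.of_forall fun x => ?_
    rw [Real.norm_eq_abs, abs_of_nonneg (hc0 _)]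
    exact hcmax _
  · filter_upwards [hae] with x hx
    have hev : ∀ᶠ lam in nhdsWithin l0 (Set.Ici 0), ∀ k : Fin M, k ≠ r l0 x →
        e x (r l0 x) + lam * c (r l0 x) < e x k + lam * c k := by
      apply Filter.Eventually.filter_mono nhdsWithin_le_nhds
      rw [Filter.eventually_all]
      intro k
      by_cases hk : k = r l0 x
      · exact Filter.Eventually.of_forall fun lam h => absurd hk h
      · have hlt : e x (r l0 x) + l0 * c (r l0 x) < e x k + l0 * c k := by
          refine lt_of_le_of_ne (hopt l0 hl0' x k) fun heq => ?_
          apply hx (r l0 x) k (Ne.symm hk)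
          have hne : c (r l0 x) - c k ≠ 0 :=
            sub_ne_zero.mpr fun h => hk (hc h).symm
          rw [div_eq_iff hne]
          linarith
        have h1 : Continuous fun lam : ℝ => e x (r l0 x) + lam * c (r l0 x) := by fun_prop
        have h2 : Continuous fun lam : ℝ => e x k + lam * c k := by fun_prop
        filter_upwards [h1.continuousAt.eventually_lt h2.continuousAt hlt] with lam h _
        exact h
    have heq : (fun lam => c (r lam x)) =ᶠ[nhdsWithin l0 (Set.Ici 0)]
        fun _ => c (r l0 x) := by
      filter_upwards [hev, self_mem_nhdsWithin] with lam h hlam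
      by_contra hne
      have hk : r lam x ≠ r l0 x := fun h' => hne (by rw [h'])
      exact absurd (hopt lam hlam x (r l0 x)) (not_le.mpr (h _ hk))
    exact continuousWithinAt_const.congr_of_eventuallyEq heq rfl
end

section
/- Let (X, 𝒜, μ) be a probability space, K, M ∈ ℕ with K, M ≥ 1, π : Fin K → ℝ with π k ≥ 0 and Σ_k π k = 1, p : X → Fin K → Fin M → ℝ measurable with values in [0, 1], and q : Fin K → Fin M → ℝ with values in [0, 1]. For a measurable router r : X → Fin M define R(r) = ∫ Σ_k π k · p x k (r x) dμ(x) and R̃(r) = ∫ Σ_k π k · q k (r x) dμ(x). Suppose r̃ and r are measurable routers with R̃(r̃) ≤ R̃(r). Then R(r̃) ≤ R(r) + 2·∫ max_{m ∈ Fin M, k ∈ Fin K} |p x k m − q k m| dμ(x); i.e., the excess true risk of the proxy-optimal router over any competitor is bounded by twice the expected maximal discrepancy between per-input and per-cluster model errors. -/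
open MeasureTheory

/-- Excess risk bound: if `r̃` has proxy risk at most that of `r`, then its true risk
exceeds that of `r` by at most twice the expected maximal discrepancy between
per-input and per-cluster model errors. -/
theorem excess_risk_bound_cluster_routing
    {X : Type*} [MeasurableSpace X] (μ : Measure X) [IsProbabilityMeasure μ]
    (K M : ℕ) (hK : 1 ≤ K) (hM : 1 ≤ M)
    (π : Fin K → ℝ) (hπ0 : ∀ k, 0 ≤ π k) (hπ1 : ∑ k : Fin K, π k = 1)
    (p : X → Fin K → Fin M → ℝ)
    (hpmeas : ∀ (k : Fin K) (m : Fin M), Measurable fun x => p x k m)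
    (hp : ∀ x k m, p x k m ∈ Set.Icc (0:ℝ) 1)
    (q : Fin K → Fin M → ℝ) (hq : ∀ k m, q k m ∈ Set.Icc (0:ℝ) 1)
    (rt r : X → Fin M) (hrt : Measurable rt) (hr : Measurable r)
    (hproxy : (∫ x, ∑ k : Fin K, π k * q k (rt x) ∂μ) ≤
      ∫ x, ∑ k : Fin K, π k * q k (r x) ∂μ) :
    (∫ x, ∑ k : Fin K, π k * p x k (rt x) ∂μ) ≤
      (∫ x, ∑ k : Fin K, π k * p x k (r x) ∂μ) +
        2 * ∫ x, ⨆ m : Fin M, ⨆ k : Fin K, |p x k m - q k m| ∂μ := by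
  have : Nonempty (Fin K) := ⟨⟨0, hK⟩⟩
  have : Nonempty (Fin M) := ⟨⟨0, hM⟩⟩
  have hint : ∀ (f : X → Fin K → Fin M → ℝ), (∀ k m, Measurable fun x => f x k m) →
      (∀ x k m, f x k m ∈ Set.Icc (0:ℝ) 1) → ∀ s : X → Fin M, Measurable s →
      Integrable (fun x => ∑ k : Fin K, π k * f x k (s x)) μ := by
    intro f hf hf1 s hs
    refine integrable_finsetSum _ fun k _ => Integrable.const_mul ?_ _
    have hm : Measurable fun x => f x k (s x) := by
      have h : (fun x => f x k (s x)) = fun x => ∑ m, if s x = m then f x k m else 0 := by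
        funext x; simp
      rw [h]
      exact Finset.measurable_sum _ fun m _ =>
        Measurable.ite (hs (measurableSet_singleton m)) (hf k m) measurable_const
    refine Integrable.of_bound hm.aestronglyMeasurable 1 (Filter.Eventually.of_forall fun x => ?_)
    rw [Real.norm_eq_abs, abs_le]
    have := hf1 x k (s x)
    constructor <;> linarith [this.1, this.2]
  have hle : ∀ x k m, |p x k m - q k m| ≤ ⨆ m : Fin M, ⨆ k : Fin K, |p x k m - q k m| := by
    intro x k m
    exact (le_ciSup (f := fun k => |p x k m - q k m|) (Set.finite_range _).bddAbove k).trans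
      (le_ciSup (f := fun m => ⨆ k, |p x k m - q k m|) (Set.finite_range _).bddAbove m)
  have hD : Integrable (fun x => ⨆ m : Fin M, ⨆ k : Fin K, |p x k m - q k m|) μ := by
    have hm : Measurable (fun x => ⨆ m : Fin M, ⨆ k : Fin K, |p x k m - q k m|) :=
      Measurable.iSup fun m => Measurable.iSup fun k => by
        have := hpmeas k m
        fun_prop
    refine Integrable.of_bound hm.aestronglyMeasurable 1 (Filter.Eventually.of_forall fun x => ?_)
    have h0 := (abs_nonneg _).trans (hle x ⟨0, hK⟩ ⟨0, hM⟩)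
    rw [Real.norm_eq_abs, abs_of_nonneg h0]
    refine ciSup_le fun m => ciSup_le fun k => ?_
    rw [abs_le]
    have h1 := hp x k m
    have h2 := hq k m
    constructor <;> linarith [h1.1, h1.2, h2.1, h2.2]
  have key : ∀ x m, |(∑ k, π k * p x k m) - ∑ k, π k * q k m| ≤
      ⨆ m : Fin M, ⨆ k : Fin K, |p x k m - q k m| := by
    intro x m
    rw [← Finset.sum_sub_distrib]
    refine (Finset.abs_sum_le_sum_abs _ _).trans ?_
    calc _ ≤ ∑ k, π k * ⨆ m : Fin M, ⨆ k : Fin K, |p x k m - q k m| := by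
          refine Finset.sum_le_sum fun k _ => ?_
          rw [← mul_sub, abs_mul, abs_of_nonneg (hπ0 k)]
          exact mul_le_mul_of_nonneg_left (hle x k m) (hπ0 k)
      _ = _ := by rw [← Finset.sum_mul, hπ1, one_mul]
  have ip := hint p hpmeas hp
  have iq := hint (fun _ => q) (fun _ _ => measurable_const) (fun _ => hq)
  have h1 := integral_mono (ip rt hrt) ((iq rt hrt).add hD) (fun x => by
    have := (abs_le.1 (key x (rt x))).2
    simp only [Pi.add_apply]
    linarith)
  have h2 := integral_mono (iq r hr) ((ip r hr).add hD) (fun x => by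
    have := (abs_le.1 (key x (r x))).1
    simp only [Pi.add_apply]
    linarith)
  rw [integral_add' (iq rt hrt) hD] at h1
  rw [integral_add' (ip r hr) hD] at h2
  linarith
end
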